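/- For every k > 0 and every nonzero r ∈ ℝ², the 2×2 matrix-valued circle integral satisfies ∫₀^{2π} d(θ) ⊗ d(θ) · exp(i k r·d(θ)) dθ = 2π [ (J₁(k|r|)/(k|r|)) I + (J₀(k|r|) − 2 J₁(k|r|)/(k|r|)) r̂ ⊗ r̂ ], where d(θ) = (cos θ, sin θ), r̂ = r/|r|, I is the 2×2 identity matrix, and a ⊗ b denotes the matrix (aᵢ bⱼ). -/

import Mathlib

/-- Bessel function of the first kind of order zero, defined by its power series. -/
noncomputable def J0 (t : ℝ) : ℝ :=
  ∑' p : ℕ, (-1 : ℝ) ^ p / ((Nat.factorial p : ℝ) ^ 2) * (t / 2) ^ (2 * p)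

/-- Bessel function of the first kind of order one, defined by its power series. -/
noncomputable def J1 (t : ℝ) : ℝ :=
  ∑' p : ℕ, (-1 : ℝ) ^ p / ((Nat.factorial p : ℝ) * (Nat.factorial (p + 1) : ℝ)) *
    (t / 2) ^ (2 * p + 1)

/-- The unit direction `d(θ) = (cos θ, sin θ)` as a vector in `ℝ²`. -/
noncomputable def dir (θ : ℝ) : Fin 2 → ℝ := ![Real.cos θ, Real.sin θ]

/-- Euclidean norm of a vector in `ℝ²`. -/
noncomputable def nrm (r : Fin 2 → ℝ) : ℝ := Real.sqrt (r 0 ^ 2 + r 1 ^ 2)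

/-!
Everything reduces to Poisson's integral for `J_n`, which comes from expanding `exp (i t cos θ)` and
integrating termwise against `sin ^ (2n) θ`.  After rotating so that `r` points along `d(φ)`, write
`d(θ + φ) = cos θ d(φ) + sin θ d(φ + π/2)`.  The cross term vanishes by `θ ↦ -θ`, and
`d(φ) ⊗ d(φ) + d(φ + π/2) ⊗ d(φ + π/2) = I` eliminates `d(φ + π/2)` in favour of the identity.
-/

section BesselIntegrals

open Real
open scoped Nat

theorem hasSum_intervalIntegral_mul_exp {g h : ℝ → ℂ} (hg : Continuous g) (hh : Continuous h)
    (a b : ℝ) :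
    HasSum (fun n : ℕ => ∫ θ in a..b, g θ * (h θ ^ n / n !))
      (∫ θ in a..b, g θ * Complex.exp (h θ)) := by
  let K : TopologicalSpace.Compacts ℝ := ⟨Set.uIcc a b, isCompact_uIcc⟩
  let G : C(K, ℂ) := ContinuousMap.restrict K ⟨g, hg⟩
  let H : C(K, ℂ) := ContinuousMap.restrict K ⟨h, hh⟩
  let f : ℕ → C(ℝ, ℂ) := fun n => ⟨fun θ => g θ * (h θ ^ n / n !), by fun_prop⟩
  have norm_le (n : ℕ) : ‖(f n).restrict K‖ ≤ ‖G‖ * (‖H‖ ^ n / n !) := by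
    refine (ContinuousMap.norm_le _ (by positivity)).2 fun θ => ?_
    calc ‖g θ * (h θ ^ n / n !)‖ = ‖G θ‖ * (‖H θ‖ ^ n / n !) := by
          rw [norm_mul, norm_div, norm_pow, Complex.norm_natCast]; rfl
      _ ≤ ‖G‖ * (‖H‖ ^ n / n !) := by
          gcongr <;> exact ContinuousMap.norm_coe_le_norm _ _
  have summable_norm : Summable fun n => ‖(f n).restrict K‖ :=
    ((Real.summable_pow_div_factorial ‖H‖).mul_left ‖G‖).of_nonneg_of_le
      (fun _ => norm_nonneg _) norm_le
  have tsum_eq (θ : ℝ) : ∑' n, f n θ = g θ * Complex.exp (h θ) := by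
    rw [Complex.exp_eq_exp_ℂ]
    exact ((NormedSpace.expSeries_div_hasSum_exp (h θ)).mul_left (g θ)).tsum_eq
  have termwise := intervalIntegral.hasSum_intervalIntegral_of_summable_norm summable_norm
  simp only [tsum_eq] at termwise
  exact termwise

theorem integral_comp_add_right_of_periodic {E : Type*} [NormedAddCommGroup E] [NormedSpace ℝ E]
    {f : ℝ → E} {T : ℝ} (hf : Function.Periodic f T) (c : ℝ) :
    ∫ x in (0 : ℝ)..T, f (x + c) = ∫ x in (0 : ℝ)..T, f x := by
  rw [intervalIntegral.integral_comp_add_right f c, zero_add, add_comm T]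
  simpa only [zero_add] using hf.intervalIntegral_add_eq c 0

theorem integral_sin_smul_comp_cos {E : Type*} [NormedAddCommGroup E] [NormedSpace ℝ E]
    (f : ℝ → E) : ∫ θ in (0 : ℝ)..(2 * π), sin θ • f (cos θ) = 0 := by
  have reflect := intervalIntegral.integral_comp_sub_left (a := 0) (b := 2 * π)
    (fun θ : ℝ => sin θ • f (cos θ)) (2 * π)
  simp only [sin_two_pi_sub, cos_two_pi_sub, sub_self, sub_zero, neg_smul,
    intervalIntegral.integral_neg] at reflect
  have : IsAddTorsionFree E := .of_isTorsionFree ℝ E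
  exact self_eq_neg.mp reflect.symm

theorem integral_sin_pow_mul_cos_pow_odd_two_pi (m n : ℕ) :
    ∫ θ in (0 : ℝ)..(2 * π), sin θ ^ m * cos θ ^ (2 * n + 1) = 0 := by
  rw [integral_sin_pow_mul_cos_pow_odd, sin_zero, sin_two_pi, intervalIntegral.integral_same]

theorem integral_cos_pow_even_two_pi (n : ℕ) :
    ∫ θ in (0 : ℝ)..(2 * π), cos θ ^ (2 * n) = 2 * π * (2 * n)! / (4 ^ n * n ! ^ 2) := by
  induction n with
  | zero => simp
  | succ n ih =>
    rw [mul_add_one 2 n, integral_cos_pow, ih, sin_two_pi, sin_zero,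
      Nat.factorial_succ (2 * n + 1), Nat.factorial_succ (2 * n), Nat.factorial_succ n]
    push_cast
    field_simp
    ring

theorem integral_sin_pow_even_mul_cos_pow_even_two_pi (m n : ℕ) :
    ∫ θ in (0 : ℝ)..(2 * π), sin θ ^ (2 * m) * cos θ ^ (2 * n) =
      2 * π * ((2 * m)! * (2 * n)!) / (4 ^ (m + n) * (m ! * n ! * (m + n)!)) := by
  induction m generalizing n with
  | zero => simp [integral_cos_pow_even_two_pi, sq]
  | succ m ih =>
    have sin_sq_split (θ : ℝ) : sin θ ^ (2 * (m + 1)) * cos θ ^ (2 * n) =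
        sin θ ^ (2 * m) * cos θ ^ (2 * n) - sin θ ^ (2 * m) * cos θ ^ (2 * (n + 1)) := by
      rw [mul_add_one 2 m, pow_add, sin_sq]
      ring
    simp only [sin_sq_split]
    rw [intervalIntegral.integral_sub (Continuous.intervalIntegrable (by fun_prop) _ _)
      (Continuous.intervalIntegrable (by fun_prop) _ _), ih, ih, mul_add_one 2 n, mul_add_one 2 m,
      ← add_assoc m n 1, add_right_comm m 1 n]
    simp only [Nat.factorial_succ]
    push_cast
    field_simp
    ring

/-- The Bessel function of the first kind of integer order `n ≥ 0`, defined by its power series;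
`J0` and `J1` are the orders `0` and `1`. -/
noncomputable def besselJ (n : ℕ) (t : ℝ) : ℝ :=
  ∑' p : ℕ, (-1) ^ p / (p ! * (n + p)!) * (t / 2) ^ (n + 2 * p)

theorem besselJ_zero (t : ℝ) : besselJ 0 t = J0 t := by
  simp only [besselJ, J0, zero_add, sq]

theorem besselJ_one (t : ℝ) : besselJ 1 t = J1 t := by
  simp only [besselJ, J1, add_comm 1]

theorem hasSum_integral_sin_pow_even_mul_exp_cos (n : ℕ) (t : ℝ) :
    HasSum (fun p : ℕ => (((-1) ^ p * t ^ (2 * p) / (2 * p)! *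
        ∫ θ in (0 : ℝ)..(2 * π), sin θ ^ (2 * n) * cos θ ^ (2 * p) : ℝ) : ℂ))
      (∫ θ in (0 : ℝ)..(2 * π), ((sin θ ^ (2 * n) : ℝ) : ℂ) *
        Complex.exp (Complex.I * ((t * cos θ : ℝ) : ℂ))) := by
  have expansion := hasSum_intervalIntegral_mul_exp
    (g := fun θ => ((sin θ ^ (2 * n) : ℝ) : ℂ)) (h := fun θ => Complex.I * ((t * cos θ : ℝ) : ℂ))
    (by fun_prop) (by fun_prop) 0 (2 * π)
  have term_eq (q : ℕ) : (∫ θ in (0 : ℝ)..(2 * π), ((sin θ ^ (2 * n) : ℝ) : ℂ) *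
        ((Complex.I * ((t * cos θ : ℝ) : ℂ)) ^ q / q !)) =
      (Complex.I * t) ^ q / q ! *
        ((∫ θ in (0 : ℝ)..(2 * π), sin θ ^ (2 * n) * cos θ ^ q : ℝ) : ℂ) := by
    rw [← intervalIntegral.integral_ofReal, ← intervalIntegral.integral_const_mul]
    congr 1 with θ
    push_cast
    ring
  simp only [term_eq] at expansion
  rw [← (mul_right_injective₀ (two_ne_zero (α := ℕ))).hasSum_iff] at expansion
  · convert expansion using 2 with p
    simp only [Function.comp_apply, mul_pow, pow_mul Complex.I, Complex.I_sq]
    push_cast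
    rfl
  · intro q hq
    obtain ⟨p, rfl | rfl⟩ := q.even_or_odd'
    · exact absurd ⟨p, rfl⟩ hq
    · rw [integral_sin_pow_mul_cos_pow_odd_two_pi, Complex.ofReal_zero, mul_zero]

-- Multiplied through by `(2t) ^ n`: the quotient `J_n(t) / t ^ n` is a junk value at `t = 0`.
theorem poisson_integral_besselJ (n : ℕ) (t : ℝ) :
    (((2 * t) ^ n : ℝ) : ℂ) * (∫ θ in (0 : ℝ)..(2 * π), ((sin θ ^ (2 * n) : ℝ) : ℂ) *
        Complex.exp (Complex.I * ((t * cos θ : ℝ) : ℂ))) =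
      ((2 * π * ((2 * n)! / n !) * besselJ n t : ℝ) : ℂ) := by
  rw [← (hasSum_integral_sin_pow_even_mul_exp_cos n t).tsum_eq, ← Complex.ofReal_tsum,
    ← Complex.ofReal_mul, besselJ, ← tsum_mul_left, ← tsum_mul_left]
  congr 2 with p
  have four_pow : (4 : ℝ) ^ (n + p) = 2 ^ n * 2 ^ (n + 2 * p) := by
    rw [show (4 : ℝ) = 2 ^ 2 by norm_num, ← pow_mul, ← pow_add]
    congr 1
    ring
  rw [integral_sin_pow_even_mul_cos_pow_even_two_pi, four_pow, div_pow]
  field_simp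
  ring

theorem integral_exp_cos (t : ℝ) :
    (∫ θ in (0 : ℝ)..(2 * π), Complex.exp (Complex.I * ((t * cos θ : ℝ) : ℂ))) =
      2 * π * J0 t := by
  simpa [besselJ_zero] using poisson_integral_besselJ 0 t

theorem integral_sin_sq_mul_exp_cos {t : ℝ} (ht : t ≠ 0) :
    (∫ θ in (0 : ℝ)..(2 * π), ((sin θ ^ 2 : ℝ) : ℂ) *
        Complex.exp (Complex.I * ((t * cos θ : ℝ) : ℂ))) = 2 * π * (J1 t / t) := by
  have t_ne_zero : (t : ℂ) ≠ 0 := Complex.ofReal_ne_zero.2 ht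
  have poisson : 2 * t * (∫ θ in (0 : ℝ)..(2 * π), ((sin θ ^ 2 : ℝ) : ℂ) *
      Complex.exp (Complex.I * ((t * cos θ : ℝ) : ℂ))) = 2 * π * 2 * J1 t := by
    simpa [besselJ_one] using poisson_integral_besselJ 1 t
  refine mul_left_cancel₀ (mul_ne_zero two_ne_zero t_ne_zero) (poisson.trans ?_)
  field_simp

theorem integral_sin_mul_cos_mul_exp_cos (t : ℝ) :
    (∫ θ in (0 : ℝ)..(2 * π), ((sin θ * cos θ : ℝ) : ℂ) *
      Complex.exp (Complex.I * ((t * cos θ : ℝ) : ℂ))) = 0 := by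
  simpa [mul_assoc] using integral_sin_smul_comp_cos
    fun x : ℝ => (x : ℂ) * Complex.exp (Complex.I * ((t * x : ℝ) : ℂ))

theorem integral_trig_quadratic_mul_exp_cos {t : ℝ} (ht : t ≠ 0) (a b c : ℝ) :
    (∫ θ in (0 : ℝ)..(2 * π), ((a + b * sin θ ^ 2 + c * (sin θ * cos θ) : ℝ) : ℂ) *
        Complex.exp (Complex.I * ((t * cos θ : ℝ) : ℂ))) =
      2 * π * ((a * J0 t + b * (J1 t / t) : ℝ) : ℂ) := by
  have split (θ : ℝ) : ((a + b * sin θ ^ 2 + c * (sin θ * cos θ) : ℝ) : ℂ) *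
        Complex.exp (Complex.I * ((t * cos θ : ℝ) : ℂ)) =
      a * Complex.exp (Complex.I * ((t * cos θ : ℝ) : ℂ)) +
      b * (((sin θ ^ 2 : ℝ) : ℂ) * Complex.exp (Complex.I * ((t * cos θ : ℝ) : ℂ))) +
      c * (((sin θ * cos θ : ℝ) : ℂ) * Complex.exp (Complex.I * ((t * cos θ : ℝ) : ℂ))) := by
    push_cast
    ring
  simp only [split]
  rw [intervalIntegral.integral_add (Continuous.intervalIntegrable (by fun_prop) _ _)
      (Continuous.intervalIntegrable (by fun_prop) _ _),
    intervalIntegral.integral_add (Continuous.intervalIntegrable (by fun_prop) _ _)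
      (Continuous.intervalIntegrable (by fun_prop) _ _)]
  simp only [intervalIntegral.integral_const_mul, integral_exp_cos,
    integral_sin_sq_mul_exp_cos ht, integral_sin_mul_cos_mul_exp_cos]
  push_cast
  ring

end BesselIntegrals

section Direction

open Real

theorem dir_add (θ φ : ℝ) : dir (θ + φ) = cos θ • dir φ + sin θ • dir (φ + π / 2) := by
  ext i
  fin_cases i <;> simp [dir, cos_add, sin_add] <;> ring

theorem dir_add_mul_dir_add (θ φ : ℝ) (i j : Fin 2) :
    dir (θ + φ) i * dir (θ + φ) j = dir φ i * dir φ j +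
      (dir (φ + π / 2) i * dir (φ + π / 2) j - dir φ i * dir φ j) * sin θ ^ 2 +
      (dir φ i * dir (φ + π / 2) j + dir (φ + π / 2) i * dir φ j) * (sin θ * cos θ) := by
  simp only [dir_add θ φ, Pi.add_apply, Pi.smul_apply, smul_eq_mul]
  linear_combination dir φ i * dir φ j * sin_sq_add_cos_sq θ

theorem dir_periodic : Function.Periodic dir (2 * π) := fun θ => by
  simp only [dir, cos_add_two_pi, sin_add_two_pi]

theorem dir_mul_dir_add_orthogonal (φ : ℝ) (i j : Fin 2) :
    dir φ i * dir φ j + dir (φ + π / 2) i * dir (φ + π / 2) j = if i = j then 1 else 0 := by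
  fin_cases i <;> fin_cases j <;>
    simp [dir, cos_add_pi_div_two, sin_add_pi_div_two, ← sq, mul_comm]

theorem exists_eq_nrm_smul_dir (r : Fin 2 → ℝ) : ∃ φ, r = nrm r • dir φ := by
  let z : ℂ := ⟨r 0, r 1⟩
  have norm_z : ‖z‖ = nrm r := Complex.norm_eq_sqrt_sq_add_sq z
  refine ⟨z.arg, ?_⟩
  ext i
  fin_cases i
  · exact (norm_z ▸ Complex.norm_mul_cos_arg z).symm
  · exact (norm_z ▸ Complex.norm_mul_sin_arg z).symm

theorem nrm_pos {r : Fin 2 → ℝ} (hr : r ≠ 0) : 0 < nrm r := by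
  refine (Real.sqrt_nonneg _).lt_of_ne' fun nrm_eq_zero : nrm r = 0 => hr ?_
  obtain ⟨φ, polar⟩ := exists_eq_nrm_smul_dir r
  rwa [nrm_eq_zero, zero_smul] at polar

theorem integral_dir_mul_dir_mul_exp_cos_sub {t : ℝ} (ht : t ≠ 0) (φ : ℝ) (i j : Fin 2) :
    (∫ θ in (0 : ℝ)..(2 * π), ((dir θ i * dir θ j : ℝ) : ℂ) *
        Complex.exp (Complex.I * ((t * cos (θ - φ) : ℝ) : ℂ))) =
      2 * π * ((J1 t / t * (if i = j then 1 else 0) +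
        (J0 t - 2 * J1 t / t) * dir φ i * dir φ j : ℝ) : ℂ) := by
  have periodic : Function.Periodic (fun θ : ℝ => ((dir θ i * dir θ j : ℝ) : ℂ) *
      Complex.exp (Complex.I * ((t * cos (θ - φ) : ℝ) : ℂ))) (2 * π) := fun θ => by
    simp only [dir_periodic θ, add_sub_right_comm, cos_add_two_pi]
  rw [← integral_comp_add_right_of_periodic periodic φ]
  simp only [fun θ => dir_add_mul_dir_add θ φ i j, add_sub_cancel_right]
  rw [integral_trig_quadratic_mul_exp_cos ht, ← dir_mul_dir_add_orthogonal φ]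
  congr 2
  ring

end Direction

theorem second_moment_circle_integral_general (k : ℝ) (hk : k ≠ 0) (r : Fin 2 → ℝ) (hr : r ≠ 0) :
    ∀ i j : Fin 2,
      (∫ θ in (0:ℝ)..(2 * Real.pi),
          ((dir θ i * dir θ j : ℝ) : ℂ) *
            Complex.exp (Complex.I *
              ((k * (r 0 * Real.cos θ + r 1 * Real.sin θ) : ℝ) : ℂ))) =
      2 * (Real.pi : ℂ) *
        ((J1 (k * nrm r) / (k * nrm r) * (if i = j then 1 else 0) +
          (J0 (k * nrm r) - 2 * J1 (k * nrm r) / (k * nrm r)) *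
            (r i / nrm r) * (r j / nrm r) : ℝ) : ℂ) := by
  obtain ⟨φ, polar⟩ := exists_eq_nrm_smul_dir r
  have coord (i : Fin 2) : r i = nrm r * dir φ i := congrFun polar i
  have unit_coord (i : Fin 2) : r i / nrm r = dir φ i :=
    (eq_div_of_mul_eq (nrm_pos hr).ne' ((mul_comm _ _).trans (coord i).symm)).symm
  have phase (θ : ℝ) : k * (r 0 * Real.cos θ + r 1 * Real.sin θ) =
      k * nrm r * Real.cos (θ - φ) := by
    rw [coord 0, coord 1, Real.cos_sub]
    simp only [dir, Matrix.cons_val_zero, Matrix.cons_val_one]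
    ring
  intro i j
  simp only [phase, unit_coord]
  exact integral_dir_mul_dir_mul_exp_cos_sub (mul_ne_zero hk (nrm_pos hr).ne') φ i j

/-- The second-moment circle integral: for every `k > 0` and nonzero `r ∈ ℝ²`,
`∫₀^{2π} d(θ) ⊗ d(θ) exp (i k r · d(θ)) dθ
  = 2π [ (J₁(k|r|)/(k|r|)) I + (J₀(k|r|) - 2 J₁(k|r|)/(k|r|)) r̂ ⊗ r̂ ]`,
stated entrywise for the 2×2 matrices. -/
theorem second_moment_circle_integral (k : ℝ) (hk : 0 < k) (r : Fin 2 → ℝ) (hr : r ≠ 0) :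
    ∀ i j : Fin 2,
      (∫ θ in (0:ℝ)..(2 * Real.pi),
          ((dir θ i * dir θ j : ℝ) : ℂ) *
            Complex.exp (Complex.I *
              ((k * (r 0 * Real.cos θ + r 1 * Real.sin θ) : ℝ) : ℂ))) =
      2 * (Real.pi : ℂ) *
        ((J1 (k * nrm r) / (k * nrm r) * (if i = j then 1 else 0) +
          (J0 (k * nrm r) - 2 * J1 (k * nrm r) / (k * nrm r)) *
            (r i / nrm r) * (r j / nrm r) : ℝ) : ℂ) :=
  second_moment_circle_integral_general k hk.ne' r hr
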